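/- For every integer k ≥ 2 with k ≡ 2 (mod 4), the liminferior as n → ∞ of Φ_k(n) · log log n / n^k equals L(k/2, χ₁)^{−1} · e^{−γ}, where χ₁ is the non-principal Dirichlet character modulo 4 and L(s, χ₁) is its Dirichlet L-function, and γ is the Euler–Mascheroni constant; that is, the minimal order of Φ_k(n) is L(k/2, χ₁)^{−1} e^{−γ} n^k / log log n. -/

import Mathlib

open Filter Real

/-- `Φ_k(n)`: the number of `k`-tuples `(x_1, …, x_k)` over `ℤ/nℤ` such that
`x_1² + ⋯ + x_k²` is a unit modulo `n`. -/
noncomputable def genTotient (k n : ℕ) : ℕ :=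
  Nat.card {x : Fin k → ZMod n // IsUnit (∑ i, x i ^ 2)}


/-- The non-principal Dirichlet character modulo 4, as a `ℂ`-valued Dirichlet character. -/
noncomputable def chiOne : DirichletCharacter ℂ 4 := ZMod.χ₄.ringHomComp (Int.castRingHom ℂ)

lemma genTotient_mul (k m n : ℕ) (h : m.Coprime n) :
    genTotient k (m * n) = genTotient k m * genTotient k n := by
  unfold genTotient
  rw [← Nat.card_prod]
  let e := ZMod.chineseRemainder h
  refine Nat.card_congr ?_
  refine Equiv.trans (Equiv.subtypeEquiv (p := _)
    (q := fun y : (Fin k → ZMod m) × (Fin k → ZMod n) =>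
      IsUnit (∑ i, y.1 i ^ 2) ∧ IsUnit (∑ i, y.2 i ^ 2))
    ((Equiv.arrowCongr (Equiv.refl _) e.toEquiv).trans (Equiv.arrowProdEquivProdArrow _ _ _)) ?_)
    (Equiv.subtypeProdEquivProd (p := fun x : Fin k → ZMod m => IsUnit (∑ i, x i ^ 2))
      (q := fun x : Fin k → ZMod n => IsUnit (∑ i, x i ^ 2)))
  intro x
  rw [← MulEquiv.isUnit_map e, Prod.isUnit_iff]
  simp [Equiv.arrowProdEquivProdArrow, map_sum, Prod.fst_sum, Prod.snd_sum]

lemma genTotient_prime_pow (k p e : ℕ) [hp : Fact p.Prime] :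
    genTotient k (p ^ (e + 1)) = p ^ (k * e) * genTotient k p := by
  have hne : p ^ (e+1) ≠ 0 := pow_ne_zero _ hp.out.ne_zero
  have : NeZero (p ^ (e + 1)) := ⟨hne⟩
  have hd : p ∣ p ^ (e + 1) := dvd_pow_self p (by simp)
  let φ := ZMod.castHom hd (ZMod p)
  have hφ : Function.Surjective φ := ZMod.castHom_surjective hd
  have hunit : ∀ a : ZMod (p ^ (e+1)), IsUnit a ↔ IsUnit (φ a) := by
    intro a
    obtain ⟨b, rfl⟩ := ZMod.natCast_zmod_surjective a
    rw [map_natCast, ZMod.isUnit_iff_coprime, ZMod.isUnit_iff_coprime]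
    rw [Nat.coprime_pow_right_iff (by simp)]
  let Ψ : (Fin k → ZMod (p ^ (e+1))) →+ (Fin k → ZMod p) :=
    { toFun := fun x i => φ (x i)
      map_zero' := by ext; simp
      map_add' := by intros; ext; simp }
  have hΨ : Function.Surjective Ψ := by
    intro y
    choose g hg using hφ
    exact ⟨fun i => g (y i), by ext i; exact hg (y i)⟩
  unfold genTotient
  have h1 : Nat.card Ψ.ker = p ^ (k * e) := by
    have h2 := AddSubgroup.card_eq_card_quotient_mul_card_addSubgroup Ψ.ker
    rw [Nat.card_congr (QuotientAddGroup.quotientKerEquivOfSurjective Ψ hΨ).toEquiv] at h2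
    simp only [Nat.card_eq_fintype_card, Fintype.card_pi, ZMod.card, Finset.prod_const,
      Finset.card_univ, Fintype.card_fin] at h2 ⊢
    have : 0 < p ^ k := pow_pos hp.out.pos _
    apply Nat.eq_of_mul_eq_mul_left this
    rw [← h2]; ring
  rw [← h1, ← Nat.card_prod]
  choose g hg using hΨ
  refine Nat.card_congr ⟨fun x => (⟨x.1 - g (Ψ x.1), by simp [AddMonoidHom.mem_ker, hg]⟩,
    ⟨Ψ x.1, by
      have := (hunit _).1 x.2
      simpa [map_sum, Ψ] using this⟩), fun y => ⟨y.1.1 + g y.2.1, ?_⟩, ?_, ?_⟩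
  · rw [hunit]
    have h3 : Ψ (y.1.1 + g y.2.1) = y.2.1 := by
      rw [map_add, hg, (AddMonoidHom.mem_ker).1 y.1.2, zero_add]
    have := y.2.2
    rw [← h3] at this
    simpa [map_sum, Ψ] using this
  · intro x; ext; simp
  · intro y
    have h3 : Ψ (y.1.1 + g y.2.1) = y.2.1 := by
      rw [map_add, hg, (AddMonoidHom.mem_ker).1 y.1.2, zero_add]
    ext
    · simp only [h3, add_sub_cancel_right]
    · simp only [h3]

lemma genTotient_one (k : ℕ) : genTotient k 1 = 1 := by
  unfold genTotient
  rw [Nat.card_eq_one_iff_unique]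
  constructor
  · infer_instance
  · exact ⟨⟨0, isUnit_of_subsingleton _⟩⟩

lemma genTotient_div (k n : ℕ) (hn : n ≠ 0) :
    (genTotient k n : ℝ) / (n : ℝ) ^ k =
      ∏ p ∈ n.primeFactors, ((genTotient k p : ℝ) / (p : ℝ) ^ k) := by
  induction n using Nat.recOnPosPrimePosCoprime with
  | zero => exact absurd rfl hn
  | one => simp [genTotient_one]
  | prime_pow p e hp he =>
    have := Fact.mk hp
    obtain ⟨e, rfl⟩ : ∃ f, e = f + 1 := ⟨e - 1, by omega⟩
    rw [genTotient_prime_pow, Nat.primeFactors_prime_pow (by omega) hp, Finset.prod_singleton]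
    have : (p : ℝ) ≠ 0 := by exact_mod_cast hp.ne_zero
    push_cast
    field_simp
    ring
  | coprime a b ha hb hab iha ihb =>
    rw [genTotient_mul k a b hab, hab.primeFactors_mul, Finset.prod_union hab.disjoint_primeFactors,
      ← iha (by omega), ← ihb (by omega)]
    push_cast
    rw [mul_pow, mul_div_mul_comm]

/-- number of representations -/
noncomputable def rep (p k : ℕ) [NeZero p] (a : ZMod p) : ℤ :=
  ∑ x : Fin k → ZMod p, if ∑ i, x i ^ 2 = a then 1 else 0

lemma rep_succ (p k : ℕ) [NeZero p] (a : ZMod p) :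
    rep p (k + 1) a = ∑ y : ZMod p, rep p k (a - y ^ 2) := by
  unfold rep
  rw [← (Fin.consEquiv (fun _ : Fin (k+1) => ZMod p)).sum_comp, Fintype.sum_prod_type]
  refine Finset.sum_congr rfl fun y _ => Finset.sum_congr rfl fun x _ => ?_
  simp only [Fin.consEquiv_apply, Fin.sum_univ_succ, Fin.cons_zero, Fin.cons_succ]
  congr 1
  rw [eq_sub_iff_add_eq, add_comm]

lemma rep_zero (p : ℕ) [NeZero p] (a : ZMod p) : rep p 0 a = if a = 0 then 1 else 0 := by
  unfold rep; simp [eq_comm]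

lemma rep_two_two : ∀ a : ZMod 2,
    (∑ x : Fin 2 → ZMod 2, if ∑ i, x i ^ 2 = a then (1 : ℤ) else 0) = 2 := by
  decide

lemma rep_two (p : ℕ) [hp : Fact p.Prime] (a : ZMod p) :
    rep p 2 a = (p - ZMod.χ₄ p) + if a = 0 then ZMod.χ₄ p * p else 0 := by
  rcases hp.out.eq_two_or_odd with rfl | hodd
  · have h : ZMod.χ₄ ((2 : ℕ) : ZMod 4) = 0 := by decide
    rw [h]
    unfold rep
    have h2 := rep_two_two
    simp only [zero_mul, ite_self]
    convert h2 a
    simp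
  have hp2 : ringChar (ZMod p) ≠ 2 := by
    rw [ZMod.ringChar_zmod_n]; omega
  have hsq : ∀ b : ZMod p, rep p 1 b = quadraticChar (ZMod p) b + 1 := by
    intro b
    rw [← quadraticChar_card_sqrts hp2 b, rep_succ]
    simp only [rep_zero, sub_eq_zero]
    rw [Finset.sum_boole]
    congr 2
    ext x; simp [eq_comm]
  have hc : quadraticChar (ZMod p) (-1) = ZMod.χ₄ p := by
    rw [quadraticChar_neg_one hp2, ZMod.card]
  have hne : quadraticChar (ZMod p) ≠ 1 := quadraticChar_ne_one hp2
  have hs0 : ∑ b : ZMod p, quadraticChar (ZMod p) b = 0 := quadraticChar_sum_zero hp2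
  have key : rep p 2 a = ∑ b : ZMod p, (quadraticChar (ZMod p) b + 1) *
      (quadraticChar (ZMod p) (a - b) + 1) := by
    rw [rep_succ]
    have : ∀ b : ZMod p, quadraticChar (ZMod p) b + 1 = ∑ y : ZMod p, if y ^ 2 = b then 1 else 0 := by
      intro b
      rw [← hsq, rep_succ]
      simp only [rep_zero, sub_eq_zero, eq_comm]
    simp_rw [hsq]
    conv_rhs => enter [2, b]; rw [this b, Finset.sum_mul]
    rw [Finset.sum_comm]
    simp
  have hs1 : ∑ b : ZMod p, quadraticChar (ZMod p) (a - b) = 0 := by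
    rw [← hs0]; exact (Equiv.subLeft a).sum_comp (fun b => quadraticChar (ZMod p) b)
  have h4 : rep p 2 a = p + ∑ b : ZMod p, quadraticChar (ZMod p) b * quadraticChar (ZMod p) (a - b) := by
    rw [key]
    simp only [add_mul, mul_add, one_mul, mul_one, Finset.sum_add_distrib, hs0, hs1]
    simp [ZMod.card]; ring
  rw [h4]
  by_cases ha : a = 0
  · subst ha
    have : ∀ b : ZMod p, quadraticChar (ZMod p) b * quadraticChar (ZMod p) (0 - b) =
       ZMod.χ₄ p * (1 - if b = 0 then 1 else 0) := by
      intro b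
      by_cases hb : b = 0
      · simp [hb]
      · rw [zero_sub, ← neg_one_mul b, map_mul, hc, if_neg hb]
        have := quadraticChar_sq_one hb
        linear_combination ZMod.χ₄ p * this
    simp_rw [this]
    rw [← Finset.mul_sum, Finset.sum_sub_distrib]
    simp [ZMod.card]; ring
  · have hj := jacobiSum_nontrivial_inv hne
    rw [(quadraticChar_isQuadratic (ZMod p)).inv, hc, jacobiSum] at hj
    rw [if_neg ha, add_zero, sub_eq_add_neg, ← hj]
    congr 1
    rw [← Equiv.sum_comp (Equiv.mulLeft₀ a ha)]
    refine Finset.sum_congr rfl fun b _ => ?_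
    rw [Equiv.mulLeft₀_apply, show a - a * b = a * (1 - b) by ring, map_mul, map_mul]
    have := quadraticChar_sq_one ha
    linear_combination (quadraticChar (ZMod p) b * quadraticChar (ZMod p) (1 - b)) * this

lemma rep_even (p j : ℕ) [hp : Fact p.Prime] (a : ZMod p) :
    (p : ℤ) * rep p (2 * j) a = (p ^ (2 * j) - (ZMod.χ₄ p) ^ j * p ^ j) +
      if a = 0 then (ZMod.χ₄ p) ^ j * p ^ (j + 1) else 0 := by
  induction j generalizing a with
  | zero => simp [rep_zero]
  | succ j ih =>
    rw [show 2 * (j + 1) = 2 * j + 1 + 1 by ring, rep_succ]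
    simp_rw [rep_succ, Finset.mul_sum, ih, Finset.sum_add_distrib]
    have h2 : rep p 2 a = ∑ y : ZMod p, ∑ z : ZMod p, if a - y ^ 2 - z ^ 2 = 0 then 1 else 0 := by
      simp_rw [rep_succ, rep_zero]
    have h3 : ∑ y : ZMod p, ∑ z : ZMod p,
        (if a - y ^ 2 - z ^ 2 = 0 then (ZMod.χ₄ p) ^ j * (p : ℤ) ^ (j + 1) else 0) =
        (ZMod.χ₄ p) ^ j * p ^ (j + 1) * rep p 2 a := by
      rw [h2, Finset.mul_sum]
      refine Finset.sum_congr rfl fun y _ => ?_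
      rw [Finset.mul_sum]
      refine Finset.sum_congr rfl fun z _ => ?_
      simp
    rw [h3, rep_two]
    simp only [Finset.sum_const, Finset.card_univ, ZMod.card, nsmul_eq_mul]
    split_ifs <;> ring

lemma genTotient_prime (k p : ℕ) (hmod : k % 4 = 2) (hp : p.Prime) :
    (genTotient k p : ℝ) / (p : ℝ) ^ k =
      (1 - 1 / (p : ℝ)) * (1 - (ZMod.χ₄ p : ℝ) / (p : ℝ) ^ (k / 2)) := by
  have := Fact.mk hp
  obtain ⟨j, hj⟩ : ∃ j, k = 2 * (2 * j + 1) := ⟨k / 4, by omega⟩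
  have hk2 : k / 2 = 2 * j + 1 := by omega
  have h1 : (genTotient k p : ℤ) + rep p k 0 = p ^ k := by
    unfold genTotient rep
    rw [Finset.sum_boole, Nat.card_eq_fintype_card, Fintype.card_subtype]
    have := Finset.card_filter_add_card_filter_not (s := (Finset.univ : Finset (Fin k → ZMod p)))
      (fun x => ∑ i, x i ^ 2 = 0)
    simp only [isUnit_iff_ne_zero, ne_eq]
    rw [add_comm]
    have h5 : (Finset.univ : Finset (Fin k → ZMod p)).card = p ^ k := by simp [ZMod.card]
    rw [h5] at this
    exact_mod_cast this
  have h2 := rep_even p (2 * j + 1) 0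
  rw [← hj, if_pos rfl] at h2
  have hp0 : (p : ℝ) ≠ 0 := by exact_mod_cast hp.ne_zero
  have hχ : (ZMod.χ₄ p) ^ (2 * j + 1) = ZMod.χ₄ p := by
    rcases ZMod.isQuadratic_χ₄ (p : ZMod 4) with h | h | h <;> rw [h]
    · simp
    · simp
    · exact Odd.neg_one_pow ⟨j, rfl⟩
  rw [hχ] at h2
  have h1' : (genTotient k p : ℝ) + (rep p k 0 : ℝ) = (p : ℝ) ^ k := by exact_mod_cast h1
  have h2' : (p : ℝ) * rep p k 0 = ((p : ℝ) ^ k - (ZMod.χ₄ p : ℝ) * (p : ℝ) ^ (2 * j + 1)) +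
     (ZMod.χ₄ p : ℝ) * (p : ℝ) ^ (2 * j + 1 + 1) := by exact_mod_cast h2
  have h6 : (genTotient k p : ℝ) = p ^ k - rep p k 0 := by linarith
  have h7 : (rep p k 0 : ℝ) = (((p : ℝ) ^ k - (ZMod.χ₄ p : ℝ) * (p : ℝ) ^ (2 * j + 1)) +
     (ZMod.χ₄ p : ℝ) * (p : ℝ) ^ (2 * j + 1 + 1)) / p := by
    rw [← h2']; field_simp
  rw [h6, h7, hk2]
  have h8 : (p : ℝ) ^ k = p ^ (2 * j + 1) * p ^ (2 * j + 1) := by rw [hj]; ring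
  rw [h8]
  field_simp
  ring

namespace MinOrd
open ArithmeticFunction Topology

lemma range_eq_Ioc (f : ℕ → ℝ) (h0 : f 0 = 0) (N : ℕ) :
    ∑ n ∈ Finset.range (N + 1), f n = ∑ n ∈ Finset.Ioc 0 N, f n := by
  induction N with
  | zero => simp [h0]
  | succ N ih => rw [Finset.sum_range_succ, ih, Finset.sum_Ioc_succ_top (by omega)]

lemma sum_log (N : ℕ) : ∑ n ∈ Finset.Ioc 0 N, Real.log n = Real.log (N.factorial) := by
  induction N with
  | zero => simp
  | succ N ih =>
    rw [Finset.sum_Ioc_succ_top (by omega), ih, Nat.factorial_succ]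
    push_cast
    rw [Real.log_mul (by positivity) (by positivity), add_comm]

lemma psi_bound (N : ℕ) : ∑ n ∈ Finset.Ioc 0 N, Λ n ≤ (Real.log 4 + 4) * N := by
  have := Chebyshev.psi_le_const_mul_self (x := N) (by positivity)
  simpa [Chebyshev.psi] using this

lemma mertens_one : ∃ B : ℝ, ∀ N : ℕ, 1 ≤ N →
    |∑ n ∈ Finset.Ioc 0 N, Λ n / n - Real.log N| ≤ B := by
  refine ⟨Real.log 4 + 4, fun N hN => ?_⟩
  have h1 : ∑ n ∈ Finset.Ioc 0 N, Λ n * ((N / n : ℕ) : ℝ) = Real.log N.factorial := by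
    rw [← sum_log, ← sum_Ioc_mul_zeta_eq_sum, vonMangoldt_mul_zeta]
    rfl
  have hN0 : (0 : ℝ) < N := by exact_mod_cast hN
  have hup : ∑ n ∈ Finset.Ioc 0 N, Λ n * ((N / n : ℕ) : ℝ) ≤ N * ∑ n ∈ Finset.Ioc 0 N, Λ n / n := by
    rw [Finset.mul_sum]
    refine Finset.sum_le_sum fun n hn => ?_
    have : ((N / n : ℕ) : ℝ) ≤ (N : ℝ) / n := Nat.cast_div_le
    calc _ ≤ Λ n * ((N : ℝ) / n) := by gcongr
      _ = _ := by ring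
  have hlo : N * ∑ n ∈ Finset.Ioc 0 N, Λ n / n ≤
      ∑ n ∈ Finset.Ioc 0 N, Λ n * ((N / n : ℕ) : ℝ) + ∑ n ∈ Finset.Ioc 0 N, Λ n := by
    rw [Finset.mul_sum, ← Finset.sum_add_distrib]
    refine Finset.sum_le_sum fun n hn => ?_
    have hn0 : 0 < n := (Finset.mem_Ioc.1 hn).1
    have : (N : ℝ) / n ≤ ((N / n : ℕ) : ℝ) + 1 := by
      rw [← Nat.floor_div_eq_div (K := ℝ)]
      exact (Nat.lt_floor_add_one _).le
    calc _ = Λ n * ((N : ℝ) / n) := by ring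
      _ ≤ Λ n * (((N / n : ℕ) : ℝ) + 1) := by gcongr
      _ = _ := by ring
  have hs := Stirling.le_log_factorial_stirling (n := N) (by omega)
  have hs2 : Real.log N.factorial ≤ N * Real.log N := by
    rw [← Real.log_pow]
    apply Real.log_le_log (by positivity)
    exact_mod_cast Nat.factorial_le_pow N
  have hl1 : 0 ≤ Real.log N := Real.log_nonneg (by exact_mod_cast hN)
  have hl2 : 0 ≤ Real.log (2 * π) := Real.log_nonneg (by nlinarith [Real.pi_gt_three])
  have hl4 : 0 ≤ Real.log 4 := Real.log_nonneg (by norm_num)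
  have hpsi := psi_bound N
  rw [h1] at hup hlo
  set M := ∑ n ∈ Finset.Ioc 0 N, Λ n / n
  rw [abs_le]
  constructor
  · by_contra hc
    push Not at hc
    have : N * (M - Real.log N) < N * (-(Real.log 4 + 4)) := by gcongr
    nlinarith
  · by_contra hc
    push Not at hc
    have : N * (Real.log 4 + 4) < N * (M - Real.log N) := by gcongr
    nlinarith

/-- the real character mod 4 -/
noncomputable def X4 : ℕ →* ℝ where
  toFun n := ((ZMod.χ₄ (n : ZMod 4) : ℤ) : ℝ)
  map_one' := by simp
  map_mul' a b := by rw [Nat.cast_mul, map_mul, Int.cast_mul]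

lemma X4_apply (n : ℕ) : X4 n = ((ZMod.χ₄ (n : ZMod 4) : ℤ) : ℝ) := rfl

lemma X4_abs (n : ℕ) : |X4 n| ≤ 1 := by
  rw [X4_apply]
  rcases ZMod.isQuadratic_χ₄ (n : ZMod 4) with h | h | h <;> rw [h] <;> simp

lemma X4_sum (N : ℕ) : ∑ n ∈ Finset.range N, X4 n = if N % 4 = 2 ∨ N % 4 = 3 then 1 else 0 := by
  induction N with
  | zero => simp
  | succ N ih =>
    rw [Finset.sum_range_succ, ih, X4_apply, ZMod.χ₄_nat_eq_if_mod_four]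
    have : N % 4 < 4 := Nat.mod_lt _ (by norm_num)
    have h2 : N % 4 = 0 ∨ N % 4 = 1 ∨ N % 4 = 2 ∨ N % 4 = 3 := by omega
    rcases h2 with h | h | h | h
    · have : (N + 1) % 4 = 1 := by omega
      have h3 : N % 2 = 0 := by omega
      simp [h, this, h3]
    · have : (N + 1) % 4 = 2 := by omega
      have h3 : N % 2 = 1 := by omega
      simp [h, this, h3]
    · have : (N + 1) % 4 = 3 := by omega
      have h3 : N % 2 = 0 := by omega
      simp [h, this, h3]
    · have : (N + 1) % 4 = 0 := by omega
      have h3 : N % 2 = 1 := by omega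
      simp [h, this, h3]

lemma X4_sum_mem (N : ℕ) : 0 ≤ ∑ n ∈ Finset.range N, X4 n ∧ ∑ n ∈ Finset.range N, X4 n ≤ 1 := by
  rw [X4_sum]; split_ifs <;> simp

/-- partial sums of the L-series at 1 approach a positive limit at rate 1/(M+1) -/
lemma X4_series : ∃ l : ℝ, 0 < l ∧ ∀ M : ℕ,
    |∑ n ∈ Finset.Ioc 0 M, X4 n / n - l| ≤ 1 / (M + 1) := by
  let σ : ℕ → ℝ := fun M => ∑ n ∈ Finset.range (M + 1), X4 n / n
  let Y : ℕ → ℝ := fun M => ∑ n ∈ Finset.range (M + 1), X4 n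
  let E : ℕ → ℝ := fun M => σ M - Y M / (M + 1)
  have hY : ∀ M, 0 ≤ Y M ∧ Y M ≤ 1 := fun M => X4_sum_mem (M + 1)
  have hstep : ∀ M, E (M + 1) - E M = Y (M + 1) * (1 / (M + 1) - 1 / (M + 2)) := by
    intro M
    have h1 : σ (M + 1) = σ M + X4 (M + 1) / (M + 1) := by
      simp only [σ]; rw [Finset.sum_range_succ _ (M + 1)]; push_cast; rfl
    have h2 : Y (M + 1) = Y M + X4 (M + 1) := by
      simp only [Y]; rw [Finset.sum_range_succ _ (M + 1)]
    simp only [E, h1, h2]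
    push_cast
    field_simp
    ring
  have hpos : ∀ M : ℕ, (0 : ℝ) ≤ 1 / (M + 1) - 1 / (M + 2) := by
    intro M
    rw [sub_nonneg]
    apply one_div_le_one_div_of_le <;> [positivity; linarith]
  have hmono : Monotone E := by
    apply monotone_nat_of_le_succ
    intro M
    have := hstep M
    have := mul_nonneg (hY (M + 1)).1 (hpos M)
    linarith
  have hanti : Antitone (fun M : ℕ => E M + 1 / (M + 1)) := by
    apply antitone_nat_of_succ_le
    intro M
    have := hstep M
    have := mul_nonneg (sub_nonneg.2 (hY (M + 1)).2) (hpos M)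
    push_cast
    rw [show ((M : ℝ) + 1 + 1) = M + 2 by ring]
    linarith
  have hcross : ∀ M M', E M ≤ E M' + 1 / ((M' : ℝ) + 1) := by
    intro M M'
    have h1 := hmono (le_max_left M M')
    have h2 := hanti (le_max_right M M')
    have h3 : (0 : ℝ) ≤ 1 / ((max M M' : ℕ) + 1) := by positivity
    simp only at h2
    linarith
  have hbdd : BddAbove (Set.range E) := ⟨E 0 + 1 / ((0 : ℕ) + 1), by
    rintro _ ⟨M, rfl⟩; exact hcross M 0⟩
  refine ⟨⨆ M, E M, ?_, fun M => ?_⟩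
  · have h1 : E 1 = 1 / 2 := by
      have h0 : X4 0 = 0 := by rw [X4_apply]; simp
      simp [E, σ, Y, Finset.sum_range_succ, h0]; norm_num
    have := le_ciSup hbdd 1
    linarith
  · rw [← range_eq_Ioc (fun n => X4 n / n) (by simp)]
    have h1 := le_ciSup hbdd M
    have h2 : ⨆ M, E M ≤ E M + 1 / ((M : ℝ) + 1) := ciSup_le fun M' => hcross M' M
    have h3 : E M = σ M - Y M / (M + 1) := rfl
    have h4 : 0 ≤ Y M / ((M : ℝ) + 1) := div_nonneg (hY M).1 (by positivity)
    have h5 : Y M / ((M : ℝ) + 1) ≤ 1 / (M + 1) := by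
      gcongr; exact (hY M).2
    change |σ M - _| ≤ _
    rw [abs_le]
    constructor <;> linarith

lemma bounded_of_cauchy {u : ℕ → ℝ} (h : CauchySeq u) : ∃ B, ∀ n, |u n| ≤ B := by
  obtain ⟨R, hR, h⟩ := cauchySeq_bdd h
  refine ⟨R + |u 0|, fun n => ?_⟩
  have h1 := h n 0
  rw [Real.dist_eq] at h1
  have h2 := abs_sub_abs_le_abs_sub (u n) (u 0)
  linarith

lemma X4_log_bdd : ∃ B : ℝ, ∀ N : ℕ, |∑ n ∈ Finset.Ioc 0 N, X4 n * Real.log n / n| ≤ B := by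
  let f : ℕ → ℝ := fun n => Real.log (max n 3 : ℕ) / (max n 3 : ℕ)
  have he : ∀ n : ℕ, Real.exp 1 ≤ ((max n 3 : ℕ) : ℝ) := by
    intro n
    have : (3 : ℝ) ≤ ((max n 3 : ℕ) : ℝ) := by exact_mod_cast le_max_right n 3
    linarith [Real.exp_one_lt_d9]
  have hanti : Antitone f := by
    intro a b hab
    apply Real.log_div_self_antitoneOn (he a) (he b)
    exact_mod_cast max_le_max_right 3 hab
  have ht : Tendsto f atTop (𝓝 0) := by
    have h1 : Tendsto (fun x : ℝ => Real.log x / x) atTop (𝓝 0) := by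
      have := Real.isLittleO_log_id_atTop.tendsto_div_nhds_zero
      simpa using this
    have h2 : Tendsto (fun n : ℕ => ((max n 3 : ℕ) : ℝ)) atTop atTop := by
      apply tendsto_natCast_atTop_atTop.comp
      exact tendsto_atTop_mono (fun n => le_max_left n 3) tendsto_id
    exact h1.comp h2
  have hc := hanti.cauchySeq_series_mul_of_tendsto_zero_of_bounded (z := fun n => X4 n) (b := 1) ht
    (by intro n; rw [Real.norm_eq_abs, abs_le]; have := X4_sum_mem n; constructor <;> linarith)
  obtain ⟨B, hB⟩ := bounded_of_cauchy hc
  refine ⟨B + |f 1|, fun N => ?_⟩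
  have h0 : X4 0 = 0 := by rw [X4_apply]; simp
  have h2 : X4 2 = 0 := by rw [X4_apply]; norm_cast
  rw [← range_eq_Ioc (fun n => X4 n * Real.log n / n) (by simp)]
  have key : ∀ n, X4 n * Real.log n / n = f n • X4 n - if n = 1 then f 1 else 0 := by
    intro n
    by_cases h3 : 3 ≤ n
    · have : n ≠ 1 := by omega
      simp only [f, max_eq_left h3, this, if_false, smul_eq_mul]; ring
    · have : n = 0 ∨ n = 1 ∨ n = 2 := by omega
      rcases this with rfl | rfl | rfl
      · simp [h0]
      · simp
      · simp [h2]
  simp_rw [key]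
  rw [Finset.sum_sub_distrib]
  refine (abs_sub _ _).trans (add_le_add (hB _) ?_)
  rw [Finset.sum_ite_eq']
  split_ifs <;> simp

lemma mertens_chi : ∃ B : ℝ, ∀ N : ℕ, |∑ n ∈ Finset.Ioc 0 N, X4 n * Λ n / n| ≤ B := by
  obtain ⟨l, hl, hσ⟩ := X4_series
  obtain ⟨B, hB⟩ := X4_log_bdd
  refine ⟨(B + (Real.log 4 + 4)) / l, fun N => ?_⟩
  let f : ArithmeticFunction ℝ := ⟨fun n => X4 n * Λ n / n, by simp⟩
  let g : ArithmeticFunction ℝ := ⟨fun n => X4 n / n, by simp⟩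
  have hfg : ∀ n, (f * g) n = X4 n * Real.log n / n := by
    intro n
    rw [mul_apply]
    have h1 : ∑ x ∈ n.divisorsAntidiagonal, f x.1 * g x.2 =
        ∑ x ∈ n.divisorsAntidiagonal, X4 n / n * (Λ x.1) := by
      refine Finset.sum_congr rfl fun x hx => ?_
      have hx1 := (Nat.mem_divisorsAntidiagonal.1 hx).1
      change X4 x.1 * Λ x.1 / x.1 * (X4 x.2 / x.2) = _
      rw [← hx1, map_mul]
      push_cast
      rw [div_mul_div_comm]
      ring
    rw [h1, ← Finset.mul_sum, Nat.sum_divisorsAntidiagonal (fun i _ => Λ i), vonMangoldt_sum]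
    ring
  have h1 := sum_Ioc_mul_eq_sum_sum f g N
  simp_rw [hfg] at h1
  have h2 : |∑ n ∈ Finset.Ioc 0 N, X4 n * Real.log n / n - l * ∑ n ∈ Finset.Ioc 0 N, X4 n * Λ n / n| ≤
      Real.log 4 + 4 := by
    rw [h1, Finset.mul_sum, ← Finset.sum_sub_distrib]
    rcases Nat.eq_zero_or_pos N with rfl | hN
    · have hl4 : 0 ≤ Real.log 4 := Real.log_nonneg (by norm_num)
      simp; positivity
    have hN0 : (0 : ℝ) < N := by exact_mod_cast hN
    calc _ ≤ ∑ n ∈ Finset.Ioc 0 N, Λ n / N := by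
          refine (Finset.abs_sum_le_sum_abs _ _).trans (Finset.sum_le_sum fun n hn => ?_)
          have hn0 : 0 < n := (Finset.mem_Ioc.1 hn).1
          have hn0' : (0 : ℝ) < n := by exact_mod_cast hn0
          change |X4 n * Λ n / n * (∑ m ∈ Finset.Ioc 0 (N / n), X4 m / m) - l * (X4 n * Λ n / n)| ≤ _
          rw [show X4 n * Λ n / n * (∑ m ∈ Finset.Ioc 0 (N / n), X4 m / m) - l * (X4 n * Λ n / n) =
            X4 n * (Λ n / n) * (∑ m ∈ Finset.Ioc 0 (N / n), X4 m / m - l) by ring, abs_mul, abs_mul]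
          have h3 := hσ (N / n)
          have h4 : (1 : ℝ) / (((N / n : ℕ) : ℝ) + 1) ≤ n / N := by
            rw [div_le_div_iff₀ (by positivity) hN0, one_mul]
            have : (N : ℝ) / n ≤ ((N / n : ℕ) : ℝ) + 1 := by
              rw [← Nat.floor_div_eq_div (K := ℝ)]
              exact (Nat.lt_floor_add_one _).le
            rw [div_le_iff₀ hn0'] at this
            linarith
          have hΛ : (0 : ℝ) ≤ Λ n / n := div_nonneg vonMangoldt_nonneg hn0'.le
          calc _ ≤ 1 * |Λ n / n| * (n / N) := by
                gcongr
                · exact X4_abs n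
                · exact h3.trans h4
            _ = Λ n / N := by rw [abs_of_nonneg hΛ]; field_simp
      _ = (∑ n ∈ Finset.Ioc 0 N, Λ n) / N := by rw [Finset.sum_div]
      _ ≤ _ := by rw [div_le_iff₀ hN0]; exact psi_bound N
  rw [le_div_iff₀ hl]
  have h3 := hB N
  set Q := ∑ n ∈ Finset.Ioc 0 N, X4 n * Λ n / n
  have h4 : |l * Q| ≤ B + (Real.log 4 + 4) := by
    have := abs_sub_abs_le_abs_sub (l * Q) (∑ n ∈ Finset.Ioc 0 N, X4 n * Real.log n / n)
    rw [abs_sub_comm] at this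
    linarith
  rw [abs_mul, abs_of_pos hl] at h4
  linarith

end MinOrd

namespace MinOrd
open ArithmeticFunction Topology

lemma summable_nonprime : Summable fun n : ℕ => (if n.Prime then 0 else Λ n) / n := by
  have := ArithmeticFunction.vonMangoldt.summable_residueClass_non_primes_div (q := 1) 0
  convert this using 5 with n
  simp [ArithmeticFunction.vonMangoldt.residueClass, Subsingleton.elim _ (0 : ZMod 1)]

lemma primes_vs_vonMangoldt (X : ℕ →* ℝ) (hX : ∀ n, |X n| ≤ 1) :
    Tendsto (fun N : ℕ => ∑ p ∈ (Finset.range N).filter Nat.Prime, -Real.log (1 - X p / p)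
      - ∑ n ∈ Finset.range N, X n * Λ n / (n * Real.log n)) atTop (𝓝 0) := by
  let f : ℕ → ℝ := fun n => if n.Prime then 0 else X n * Λ n / (n * Real.log n)
  let g : ℕ → ℝ := fun n => if n.Prime then -Real.log (1 - X n / n) - X n / n else 0
  have hx2 : ∀ p : ℕ, p.Prime → |X p / p| ≤ 1 / p := by
    intro p hp
    rw [abs_div, Nat.abs_cast]
    gcongr
    exact hX p
  have hhalf : ∀ p : ℕ, p.Prime → (1 : ℝ) / p ≤ 1 / 2 := by
    intro p hp
    apply one_div_le_one_div_of_le (by norm_num)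
    exact_mod_cast hp.two_le
  have hf : Summable f := by
    refine Summable.of_norm_bounded (summable_nonprime.mul_left (1 / Real.log 2)) fun n => ?_
    simp only [f]
    by_cases hn : n.Prime
    · simp [hn]
    rw [if_neg hn, if_neg hn, Real.norm_eq_abs]
    by_cases h2 : n < 2
    · have : n = 0 ∨ n = 1 := by omega
      rcases this with rfl | rfl <;> simp
    have hl2 : 0 < Real.log 2 := Real.log_pos (by norm_num)
    have hl : Real.log 2 ≤ Real.log n := Real.log_le_log (by norm_num) (by exact_mod_cast not_lt.1 h2)
    have hl0 : 0 < Real.log n := by linarith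
    have hn0 : (0 : ℝ) < n := by exact_mod_cast (by omega : 0 < n)
    rw [abs_div, abs_mul, abs_of_nonneg (vonMangoldt_nonneg (n := n)), abs_of_pos (mul_pos hn0 hl0)]
    calc |X n| * Λ n / (n * Real.log n) ≤ 1 * Λ n / (n * Real.log 2) := by
          gcongr
          exact hX n
      _ = _ := by field_simp
  have hg : Summable g := by
    refine Summable.of_norm_bounded ((Real.summable_one_div_nat_pow.2 (by norm_num : 1 < 2)).mul_left 2) fun n => ?_
    simp only [g]
    by_cases hn : n.Prime
    · rw [if_pos hn, Real.norm_eq_abs]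
      have h1 := hx2 n hn
      have h2 := hhalf n hn
      have h3 := Real.abs_log_sub_add_sum_range_le (x := X n / n) (by linarith) 1
      simp only [Finset.range_one, Finset.sum_singleton, zero_add, pow_one, Nat.cast_zero, div_one] at h3
      rw [show -Real.log (1 - X n / n) - X n / n = -(X n / n + Real.log (1 - X n / n)) by ring, abs_neg]
      refine h3.trans ?_
      calc _ ≤ (1 / (n : ℝ)) ^ 2 / (1 / 2) := by
            gcongr
            linarith
        _ = _ := by ring
    · rw [if_neg hn]; simp
  have hfg : ∑' n, f n = ∑' n, g n := by
    have h1 : Function.support f ⊆ {n | IsPrimePow n} := by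
      intro n hn
      contrapose! hn
      have : Λ n = 0 := vonMangoldt_eq_zero_iff.2 hn
      simp [f, this]
    rw [tsum_eq_tsum_primes_of_support_subset_prime_powers hf h1]
    have h2 : ∑' n, g n = ∑' p : Nat.Primes, g p := by
      symm
      refine tsum_subtype_eq_of_support_subset (s := {p | p.Prime}) (f := g) ?_
      intro n hn
      contrapose! hn
      have hn' : ¬ n.Prime := hn
      simp [g, hn']
    rw [h2]
    refine tsum_congr fun p => ?_
    have hp := p.2
    have h1 := hx2 p hp
    have h3 := hhalf p hp
    set x : ℝ := X p / (p : ℕ) with hxdef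
    have h4 := Real.hasSum_pow_div_log_of_abs_lt_one (x := x) (by linarith)
    have h5 := h4.sub (hasSum_ite_eq (0 : ℕ) x)
    have h6 : g p = -Real.log (1 - x) - x := by simp [g, hp, hxdef]
    rw [h6, ← h5.tsum_eq]
    refine tsum_congr fun k => ?_
    have hlp : Real.log (p : ℕ) ≠ 0 := (Real.log_pos (by exact_mod_cast hp.one_lt)).ne'
    have hp0 : ((p : ℕ) : ℝ) ≠ 0 := by exact_mod_cast hp.ne_zero
    rcases Nat.eq_zero_or_pos k with rfl | hk
    · simp [f, hp]
    · have hnp : ¬ ((p : ℕ) ^ (k + 1)).Prime := Nat.Prime.not_prime_pow (by omega)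
      simp only [f, if_neg hnp]
      rw [if_neg (by omega), sub_zero, vonMangoldt_apply_pow (by omega), vonMangoldt_apply_prime hp,
        map_pow, hxdef, div_pow]
      push_cast
      rw [Real.log_pow]
      push_cast
      field_simp
  have hlim := hg.hasSum.tendsto_sum_nat.sub hf.hasSum.tendsto_sum_nat
  rw [hfg, sub_self] at hlim
  refine hlim.congr fun N => ?_
  rw [Finset.sum_filter, ← Finset.sum_sub_distrib, ← Finset.sum_sub_distrib]
  refine Finset.sum_congr rfl fun n _ => ?_
  simp only [f, g]
  by_cases hn : n.Prime
  · have hlp : Real.log n ≠ 0 := (Real.log_pos (by exact_mod_cast hn.one_lt)).ne'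
    have hp0 : (n : ℝ) ≠ 0 := by exact_mod_cast hn.ne_zero
    simp only [if_pos hn, vonMangoldt_apply_prime hn]
    field_simp
    ring
  · simp only [if_neg hn]

lemma dirichlet_log (z : ℕ → ℝ) (B : ℝ) (hB : ∀ N, |∑ n ∈ Finset.range N, z n| ≤ B) :
    ∃ C, Tendsto (fun N => ∑ n ∈ Finset.range N, z n / Real.log (max n 2 : ℕ)) atTop (𝓝 C) := by
  let f : ℕ → ℝ := fun n => (Real.log (max n 2 : ℕ))⁻¹
  have hpos : ∀ n : ℕ, 0 < Real.log (max n 2 : ℕ) := fun n =>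
    Real.log_pos (by exact_mod_cast (by omega : 1 < max n 2))
  have hanti : Antitone f := by
    intro a b hab
    apply inv_anti₀ (hpos a)
    apply Real.log_le_log
    · exact_mod_cast (by omega : 0 < max a 2)
    · exact_mod_cast max_le_max_right 2 hab
  have ht : Tendsto f atTop (𝓝 0) := by
    apply tendsto_inv_atTop_zero.comp
    apply Real.tendsto_log_atTop.comp
    apply tendsto_natCast_atTop_atTop.comp
    exact tendsto_atTop_mono (fun n => le_max_left n 2) tendsto_id
  have hc := hanti.cauchySeq_series_mul_of_tendsto_zero_of_bounded (z := z) (b := B) ht hB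
  obtain ⟨C, hC⟩ := cauchySeq_tendsto_of_complete hc
  refine ⟨C, hC.congr fun N => Finset.sum_congr rfl fun n _ => ?_⟩
  simp only [f, smul_eq_mul]
  ring

lemma conv_chi : ∃ C, Tendsto (fun N => ∑ n ∈ Finset.range N, X4 n * Λ n / (n * Real.log n)) atTop (𝓝 C) := by
  obtain ⟨B, hB⟩ := mertens_chi
  obtain ⟨C, hC⟩ := dirichlet_log (fun n => X4 n * Λ n / n) B (by
    intro N
    rcases N with _ | N
    · have := (abs_nonneg _).trans (hB 0)
      simpa using this
    · rw [range_eq_Ioc (fun n => X4 n * Λ n / n) (by simp)]; exact hB N)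
  refine ⟨C, hC.congr fun N => Finset.sum_congr rfl fun n _ => ?_⟩
  by_cases h2 : n < 2
  · have : n = 0 ∨ n = 1 := by omega
    rcases this with rfl | rfl <;> simp
  · rw [max_eq_left (by omega), div_div]

lemma loglog_step (n : ℕ) (hn : 2 ≤ n) :
    1 / (((n : ℝ) + 1) * Real.log (n + 1)) ≤ Real.log (Real.log (n + 1)) - Real.log (Real.log n) ∧
    Real.log (Real.log (n + 1)) - Real.log (Real.log n) ≤ 1 / ((n : ℝ) * Real.log n) := by
  have hn2 : (2 : ℝ) ≤ n := by exact_mod_cast hn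
  have hl : 0 < Real.log n := Real.log_pos (by linarith)
  have hl1 : 0 < Real.log (n + 1) := Real.log_pos (by linarith)
  have hd : Real.log (n + 1) - Real.log n ≤ 1 / n := by
    rw [← Real.log_div (by positivity) (by positivity)]
    have := Real.log_le_sub_one_of_pos (x := ((n : ℝ) + 1) / n) (by positivity)
    refine this.trans (le_of_eq ?_)
    field_simp
    ring
  have hd' : 1 / ((n : ℝ) + 1) ≤ Real.log (n + 1) - Real.log n := by
    rw [← Real.log_div (by positivity) (by positivity)]
    have := Real.one_sub_inv_le_log_of_pos (x := ((n : ℝ) + 1) / n) (by positivity)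
    refine le_trans (le_of_eq ?_) this
    field_simp
    ring
  rw [← Real.log_div hl1.ne' hl.ne']
  constructor
  · refine le_trans ?_ (Real.one_sub_inv_le_log_of_pos (by positivity))
    rw [inv_div, ← div_div, one_sub_div hl1.ne']
    gcongr
  · refine (Real.log_le_sub_one_of_pos (by positivity)).trans ?_
    rw [← div_div, div_sub_one hl.ne']
    gcongr

lemma conv_loglog : ∃ C, Tendsto (fun N : ℕ => ∑ n ∈ Finset.range N, 1 / ((n : ℝ) * Real.log n)
    - Real.log (Real.log N)) atTop (𝓝 C) := by
  let v : ℕ → ℝ := fun N => ∑ n ∈ Finset.range (N + 2), 1 / ((n : ℝ) * Real.log n)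
    - Real.log (Real.log (N + 2 : ℕ))
  let w : ℕ → ℝ := fun N => v N + 1 / (((N + 2 : ℕ) : ℝ) * Real.log (N + 2 : ℕ))
  have hs : ∀ N, v (N + 1) = v N + 1 / (((N + 2 : ℕ) : ℝ) * Real.log (N + 2 : ℕ)) -
     (Real.log (Real.log ((N + 2 : ℕ) + 1)) - Real.log (Real.log (N + 2 : ℕ))) := by
    intro N
    simp only [v]
    rw [show N + 1 + 2 = (N + 2) + 1 by ring, Finset.sum_range_succ _ (N + 2)]
    push_cast
    ring
  have hmono : Monotone v := monotone_nat_of_le_succ fun N => by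
    rw [hs]; linarith [(loglog_step (N + 2) (by omega)).2]
  have hanti : Antitone w := antitone_nat_of_succ_le fun N => by
    simp only [w]
    rw [hs]
    have := (loglog_step (N + 2) (by omega)).1
    have h2 : ((N + 1 + 2 : ℕ) : ℝ) = ((N + 2 : ℕ) : ℝ) + 1 := by push_cast; ring
    rw [h2]
    linarith
  have hle : ∀ N, v N ≤ w N := by
    intro N
    have : 0 ≤ Real.log (N + 2 : ℕ) := Real.log_natCast_nonneg _
    simp only [w]
    have : 0 ≤ 1 / (((N + 2 : ℕ) : ℝ) * Real.log (N + 2 : ℕ)) := by positivity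
    linarith
  have hbdd : BddAbove (Set.range v) := ⟨w 0, by
    rintro _ ⟨N, rfl⟩; exact (hle N).trans (hanti (Nat.zero_le N))⟩
  refine ⟨⨆ N, v N, ?_⟩
  rw [← tendsto_add_atTop_iff_nat 2]
  exact tendsto_atTop_ciSup hmono hbdd

lemma conv_one : ∃ C, Tendsto (fun N : ℕ => ∑ n ∈ Finset.range N, Λ n / (n * Real.log n)
    - Real.log (Real.log N)) atTop (𝓝 C) := by
  obtain ⟨B, hB⟩ := mertens_one
  obtain ⟨B2, hB2⟩ := bounded_of_cauchy Real.tendsto_harmonic_sub_log.cauchySeq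
  obtain ⟨C, hC⟩ := dirichlet_log (fun n => Λ n / n - 1 / n) (max B 0 + max B2 0) (by
    intro N
    rcases N with _ | N
    · simp; positivity
    rcases N with _ | N
    · simp; positivity
    rw [Finset.sum_sub_distrib, range_eq_Ioc (fun n => Λ n / n) (by simp)]
    have h1 : ∑ n ∈ Finset.range (N + 1 + 1), (1 : ℝ) / n = (harmonic (N + 1) : ℝ) := by
      rw [Finset.sum_range_succ', harmonic]
      push_cast
      simp
    rw [h1]
    have h2 := hB (N + 1) (by omega)
    have h3 := hB2 (N + 1)
    calc _ = |(∑ n ∈ Finset.Ioc 0 (N + 1), Λ n / n - Real.log (N + 1 : ℕ)) -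
            ((harmonic (N + 1) : ℝ) - Real.log (N + 1 : ℕ))| := by congr 1; ring
      _ ≤ _ := (abs_sub _ _).trans (add_le_add (h2.trans (le_max_left _ _)) (h3.trans (le_max_left _ _))))
  obtain ⟨C', hC'⟩ := conv_loglog
  refine ⟨C + C' + 1 / Real.log 2, ?_⟩
  refine ((hC.add hC').add_const (1 / Real.log 2)).congr' ?_
  filter_upwards [eventually_ge_atTop 2] with N hN
  have key : ∀ n : ℕ, (Λ n / n - 1 / n) / Real.log (max n 2 : ℕ) =
      Λ n / (n * Real.log n) - 1 / ((n : ℝ) * Real.log n) - if n = 1 then 1 / Real.log 2 else 0 := by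
    intro n
    by_cases h2 : n < 2
    · have : n = 0 ∨ n = 1 := by omega
      rcases this with rfl | rfl
      · simp
      · simp; ring
    · rw [max_eq_left (by omega), if_neg (by omega), sub_zero, sub_div, div_div, div_div]
  simp_rw [key]
  rw [Finset.sum_sub_distrib, Finset.sum_sub_distrib, Finset.sum_ite_eq', if_pos (by simp; omega)]
  ring

end MinOrd

namespace MinOrd
open ArithmeticFunction Topology MeasureTheory

lemma abel_limit (A : ℝ → ℝ) (hm : Measurable A) (B C : ℝ) (hB : ∀ t, |A t| ≤ B)
    (hC : Tendsto A atTop (𝓝 C)) :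
    Tendsto (fun δ : ℝ => ∫ t in Set.Ioi (0 : ℝ), δ * Real.exp (-(δ * t)) * A t) (𝓝[>] 0) (𝓝 C) := by
  have h1 : Tendsto (fun δ : ℝ => ∫ u in Set.Ioi (0 : ℝ), Real.exp (-u) * A (u / δ)) (𝓝[>] 0)
      (𝓝 (∫ u in Set.Ioi (0 : ℝ), Real.exp (-u) * C)) := by
    apply tendsto_integral_filter_of_dominated_convergence (fun u => Real.exp (-u) * B)
    · refine Eventually.of_forall fun δ => ?_
      exact (Measurable.mul (by fun_prop) (hm.comp (by fun_prop))).aestronglyMeasurable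
    · refine Eventually.of_forall fun δ => Eventually.of_forall fun u => ?_
      rw [norm_mul, Real.norm_eq_abs, Real.norm_eq_abs, abs_of_pos (Real.exp_pos _)]
      gcongr
      exact hB _
    · exact (integrableOn_exp_neg_Ioi 0).mul_const B
    · rw [ae_restrict_iff' measurableSet_Ioi]
      refine Eventually.of_forall fun u hu => ?_
      refine Tendsto.const_mul _ (hC.comp ?_)
      have : Tendsto (fun δ : ℝ => u * δ⁻¹) (𝓝[>] 0) atTop :=
        tendsto_inv_nhdsGT_zero.const_mul_atTop hu
      exact this.congr fun δ => (div_eq_mul_inv u δ).symm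
  rw [integral_mul_const, integral_exp_neg_Ioi_zero, one_mul] at h1
  refine h1.congr' ?_
  filter_upwards [self_mem_nhdsWithin] with δ hδ
  have hδ0 : 0 < δ := hδ
  have := integral_comp_mul_left_Ioi (fun u => Real.exp (-u) * A (u / δ)) 0 hδ0
  rw [mul_zero, smul_eq_mul] at this
  calc _ = δ * (δ⁻¹ * ∫ u in Set.Ioi (0 : ℝ), Real.exp (-u) * A (u / δ)) := by field_simp
    _ = _ := by
      rw [← this, ← integral_const_mul]
      refine integral_congr_ae (Eventually.of_forall fun t => ?_)
      simp only
      rw [mul_div_cancel_left₀ _ hδ0.ne']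
      ring

lemma integral_tail (δ l : ℝ) (hδ : 0 < δ) (hl : 0 ≤ l) (a : ℝ) :
    IntegrableOn (fun t => δ * Real.exp (-(δ * t)) * (if l ≤ t then a else 0)) (Set.Ioi 0) ∧
    ∫ t in Set.Ioi (0 : ℝ), δ * Real.exp (-(δ * t)) * (if l ≤ t then a else 0) =
      a * Real.exp (-(δ * l)) := by
  have hIntg : IntegrableOn (fun t => a * δ * Real.exp (-δ * t)) (Set.Ici l) := by
    rw [integrableOn_Ici_iff_integrableOn_Ioi]
    exact (integrableOn_exp_mul_Ioi (by linarith) l).const_mul _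
  have heq : (fun t => δ * Real.exp (-(δ * t)) * (if l ≤ t then a else 0)) =
      (Set.Ici l).indicator (fun t => a * δ * Real.exp (-δ * t)) := by
    ext t
    by_cases ht : l ≤ t
    · rw [if_pos ht, Set.indicator_of_mem (by exact ht), neg_mul]; ring
    · rw [if_neg ht, Set.indicator_of_notMem (by exact ht), mul_zero]
  rw [heq]
  constructor
  · exact ((integrable_indicator_iff measurableSet_Ici).2 hIntg).integrableOn
  · rw [← integral_Ici_eq_integral_Ioi, setIntegral_indicator measurableSet_Ici,
      Set.Ici_inter_Ici, sup_eq_right.2 hl, integral_Ici_eq_integral_Ioi, integral_const_mul,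
      integral_exp_mul_Ioi (by linarith)]
    rw [neg_mul]
    field_simp

/-- counting function -/
noncomputable def cf (a l : ℕ → ℝ) (t : ℝ) : ℝ := ∑' n, if l n ≤ t then a n else 0

lemma laplace (a l : ℕ → ℝ) (hl : ∀ n, 0 ≤ l n) (δ : ℝ) (hδ : 0 < δ)
    (hs : Summable fun n => |a n| * Real.exp (-(δ * l n))) :
    ∫ t in Set.Ioi (0 : ℝ), δ * Real.exp (-(δ * t)) * cf a l t = ∑' n, a n * Real.exp (-(δ * l n)) := by
  have h := hasSum_integral_of_summable_integral_norm
    (μ := volume.restrict (Set.Ioi (0 : ℝ)))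
    (F := fun n t => δ * Real.exp (-(δ * t)) * (if l n ≤ t then a n else 0))
    (fun n => (integral_tail δ (l n) hδ (hl n) (a n)).1) (by
      refine hs.congr fun n => ?_
      rw [← (integral_tail δ (l n) hδ (hl n) |a n|).2]
      refine integral_congr_ae (Eventually.of_forall fun t => ?_)
      simp only
      rw [norm_mul, norm_mul, Real.norm_eq_abs, Real.norm_eq_abs, Real.norm_eq_abs, abs_of_pos hδ,
        abs_of_pos (Real.exp_pos _)]
      split_ifs <;> simp)
  simp_rw [fun n => (integral_tail δ (l n) hδ (hl n) (a n)).2] at h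
  rw [h.tsum_eq]
  refine integral_congr_ae (Eventually.of_forall fun t => ?_)
  simp only [cf]
  rw [tsum_mul_left]

/-- counting function over logs -/
lemma cf_log (a : ℕ → ℝ) (h0 : a 0 = 0) (t : ℝ) :
    cf a (fun n => Real.log n) t = ∑ n ∈ Finset.range (⌊Real.exp t⌋₊ + 1), a n := by
  unfold cf
  rw [tsum_eq_sum (s := Finset.range (⌊Real.exp t⌋₊ + 1))]
  · refine Finset.sum_congr rfl fun n hn => ?_
    rcases Nat.eq_zero_or_pos n with rfl | hn0
    · simp [h0]
    · rw [if_pos]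
      rw [Real.log_le_iff_le_exp (by exact_mod_cast hn0), ← Nat.le_floor_iff (Real.exp_pos t).le]
      simpa [Nat.lt_succ_iff] using hn
  · intro n hn
    rw [if_neg]
    have hn' : ⌊Real.exp t⌋₊ < n := by simpa [Nat.lt_succ_iff] using hn
    rw [not_le, Real.lt_log_iff_exp_lt (by exact_mod_cast (Nat.zero_le _).trans_lt hn')]
    exact (Nat.floor_lt (Real.exp_pos t).le).1 hn'

lemma cf_id (a : ℕ → ℝ) (t : ℝ) (ht : 0 ≤ t) :
    cf a (fun n => n) t = ∑ n ∈ Finset.range (⌊t⌋₊ + 1), a n := by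
  unfold cf
  rw [tsum_eq_sum (s := Finset.range (⌊t⌋₊ + 1))]
  · refine Finset.sum_congr rfl fun n hn => ?_
    rw [if_pos]
    rw [← Nat.le_floor_iff ht]
    simpa [Nat.lt_succ_iff] using hn
  · intro n hn
    rw [if_neg]
    have hn' : ⌊t⌋₊ < n := by simpa [Nat.lt_succ_iff] using hn
    rw [not_le]
    exact (Nat.floor_lt ht).1 hn'

lemma summable_vM (δ : ℝ) (hδ : 0 < δ) :
    Summable fun n : ℕ => |Λ n / (n * Real.log n)| * Real.exp (-(δ * Real.log n)) := by
  refine Summable.of_nonneg_of_le (fun n => by positivity) (fun n => ?_)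
    (Real.summable_nat_rpow.2 (by linarith : -1 - δ < -1))
  by_cases h2 : n < 2
  · have : n = 0 ∨ n = 1 := by omega
    rcases this with rfl | rfl
    · simp; positivity
    · simp
  have hn0 : (0 : ℝ) < n := by exact_mod_cast (by omega : 0 < n)
  have hl : 0 < Real.log n := Real.log_pos (by exact_mod_cast (by omega : 1 < n))
  rw [Real.rpow_sub hn0, Real.rpow_neg_one, Real.rpow_def_of_pos hn0 δ, div_eq_mul_inv ((n:ℝ)⁻¹), ← Real.exp_neg,
    mul_comm (Real.log n) δ, abs_of_nonneg (div_nonneg vonMangoldt_nonneg (by positivity))]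
  gcongr
  rw [div_le_iff₀ (by positivity)]
  have := vonMangoldt_le_log (n := n)
  field_simp
  exact this

lemma chi_constant (C : ℝ)
    (hC : Tendsto (fun N => ∑ n ∈ Finset.range N, X4 n * Λ n / (n * Real.log n)) atTop (𝓝 C)) :
    Tendsto (fun δ : ℝ => ∑' n : ℕ, X4 n * Λ n / (n * Real.log n) * Real.exp (-(δ * Real.log n)))
      (𝓝[>] 0) (𝓝 C) := by
  set a : ℕ → ℝ := fun n => X4 n * Λ n / (n * Real.log n) with ha
  obtain ⟨B, hB⟩ := bounded_of_cauchy hC.cauchySeq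
  have hcf : cf a (fun n => Real.log n) = fun t => ∑ n ∈ Finset.range (⌊Real.exp t⌋₊ + 1), a n :=
    funext fun t => cf_log a (by simp [ha]) t
  have hm : Measurable (cf a (fun n => Real.log n)) := by
    rw [hcf]
    have h1 : Measurable (fun m : ℕ => ∑ n ∈ Finset.range (m + 1), a n) := measurable_of_countable _
    exact h1.comp (Nat.measurable_floor.comp Real.measurable_exp)
  have h := abel_limit (cf a (fun n => Real.log n)) hm B C (by
    intro t; rw [hcf]; exact hB _) (by
    rw [hcf]
    exact ((tendsto_add_atTop_iff_nat 1).2 hC).comp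
      (tendsto_nat_floor_atTop.comp Real.tendsto_exp_atTop))
  refine h.congr' ?_
  filter_upwards [self_mem_nhdsWithin] with δ hδ
  rw [laplace a _ (fun n => Real.log_natCast_nonneg n) δ hδ]
  refine Summable.of_nonneg_of_le (fun n => by positivity) (fun n => ?_) (summable_vM δ hδ)
  refine mul_le_mul_of_nonneg_right ?_ (Real.exp_pos _).le
  simp only [ha]
  rw [mul_div_assoc, abs_mul]
  calc _ ≤ 1 * |Λ n / (n * Real.log n)| := by gcongr; exact X4_abs n
    _ = _ := one_mul _

lemma one_constant (C : ℝ)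
    (hC : Tendsto (fun N : ℕ => ∑ n ∈ Finset.range N, Λ n / (n * Real.log n) - Real.log (Real.log N))
      atTop (𝓝 C)) :
    Tendsto (fun δ : ℝ => ∑' n : ℕ, Λ n / (n * Real.log n) * Real.exp (-(δ * Real.log n)) -
       ∑' n : ℕ, 1 / (n : ℝ) * Real.exp (-(δ * n)))
      (𝓝[>] 0) (𝓝 (C - Real.eulerMascheroniConstant)) := by
  set a : ℕ → ℝ := fun n => Λ n / (n * Real.log n) with ha
  set b : ℕ → ℝ := fun n => 1 / (n : ℝ) with hb
  have ha0 : ∀ n, 0 ≤ a n := fun n => div_nonneg vonMangoldt_nonneg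
    (mul_nonneg (Nat.cast_nonneg _) (Real.log_natCast_nonneg n))
  have hb0 : ∀ n, 0 ≤ b n := fun n => by positivity
  have hcfa : cf a (fun n => Real.log n) = fun t => ∑ n ∈ Finset.range (⌊Real.exp t⌋₊ + 1), a n :=
    funext fun t => cf_log a (by simp [ha]) t
  have hcfb : ∀ t, cf b (fun n => n) t = ∑ n ∈ Finset.range (⌊t⌋₊ + 1), b n := by
    intro t
    rcases le_or_gt 0 t with ht | ht
    · exact cf_id b t ht
    · rw [Nat.floor_of_nonpos ht.le]
      simp only [cf, zero_add, Finset.range_one, Finset.sum_singleton]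
      rw [show b 0 = 0 by simp [hb]]
      convert tsum_zero with n
      rw [if_neg]
      rw [not_le]
      exact ht.trans_le (Nat.cast_nonneg n)
  have hma : Measurable (cf a (fun n => Real.log n)) := by
    rw [hcfa]
    have h1 : Measurable (fun m : ℕ => ∑ n ∈ Finset.range (m + 1), a n) := measurable_of_countable _
    exact h1.comp (Nat.measurable_floor.comp Real.measurable_exp)
  have hmb : Measurable (cf b (fun n => n)) := by
    rw [funext hcfb]
    have h1 : Measurable (fun m : ℕ => ∑ n ∈ Finset.range (m + 1), b n) := measurable_of_countable _
    exact h1.comp Nat.measurable_floor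
  have hla : Tendsto (fun t => cf a (fun n => Real.log n) t - Real.log t) atTop (𝓝 C) := by
    have h1 : Tendsto (fun t : ℝ => ⌊Real.exp t⌋₊ + 1) atTop atTop :=
      (tendsto_add_atTop_iff_nat 1).2 tendsto_id |>.comp (tendsto_nat_floor_atTop.comp Real.tendsto_exp_atTop)
    have h2 := hC.comp h1
    have h3 : Tendsto (fun t : ℝ => Real.log (Real.log ((⌊Real.exp t⌋₊ + 1 : ℕ) : ℝ)) - Real.log t) atTop (𝓝 0) := by
      have hup : Tendsto (fun t : ℝ => Real.log (1 + Real.log 2 / t)) atTop (𝓝 0) := by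
        have : Tendsto (fun t : ℝ => 1 + Real.log 2 / t) atTop (𝓝 (1 + 0)) :=
          (tendsto_const_nhds.div_atTop tendsto_id).const_add 1
        have h := (Real.continuousAt_log (by norm_num : (1 + 0 : ℝ) ≠ 0)).tendsto.comp this
        rw [add_zero, Real.log_one] at h
        exact h
      refine tendsto_of_tendsto_of_tendsto_of_le_of_le' tendsto_const_nhds hup ?_ ?_
      · filter_upwards [eventually_gt_atTop 0] with t ht
        rw [sub_nonneg]
        apply Real.log_le_log ht
        rw [Real.le_log_iff_exp_le (by positivity)]
        push_cast
        exact (Nat.lt_floor_add_one _).le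
      · filter_upwards [eventually_gt_atTop 0] with t ht
        have h4 : 1 ≤ Real.exp t := Real.one_le_exp ht.le
        have h5 : Real.log ((⌊Real.exp t⌋₊ + 1 : ℕ) : ℝ) ≤ t + Real.log 2 := by
          rw [Real.log_le_iff_le_exp (by positivity), Real.exp_add, Real.exp_log (by norm_num)]
          push_cast
          have := Nat.floor_le (Real.exp_pos t).le
          linarith
        have h6 : t ≤ Real.log ((⌊Real.exp t⌋₊ + 1 : ℕ) : ℝ) := by
          rw [Real.le_log_iff_exp_le (by positivity)]
          push_cast
          exact (Nat.lt_floor_add_one _).le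
        rw [← Real.log_div (by linarith) ht.ne']
        apply Real.log_le_log (div_pos (by linarith) ht)
        rw [div_le_iff₀ ht]
        field_simp
        exact h5
    have h4 := h2.add h3
    rw [add_zero] at h4
    refine h4.congr fun t => ?_
    rw [hcfa]
    simp only [Function.comp]
    ring
  have hlb : Tendsto (fun t => cf b (fun n => n) t - Real.log t) atTop (𝓝 Real.eulerMascheroniConstant) := by
    have h2 := Real.tendsto_harmonic_sub_log.comp (tendsto_nat_floor_atTop : Tendsto (fun t : ℝ => ⌊t⌋₊) atTop atTop)
    have h3 : Tendsto (fun t : ℝ => Real.log (⌊t⌋₊ : ℝ) - Real.log t) atTop (𝓝 0) := by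
      have h5 : Tendsto (fun t : ℝ => (⌊t⌋₊ : ℝ) / t) atTop (𝓝 1) := tendsto_nat_floor_div_atTop
      have h := (Real.continuousAt_log (by norm_num : (1 : ℝ) ≠ 0)).tendsto.comp h5
      rw [Real.log_one] at h
      refine h.congr' ?_
      filter_upwards [eventually_ge_atTop 1] with t ht
      have : 0 < ⌊t⌋₊ := Nat.floor_pos.2 ht
      exact Real.log_div (by positivity) (by positivity)
    have h4 := h2.add h3
    rw [add_zero] at h4
    refine h4.congr fun t => ?_
    rw [hcfb]
    simp only [Function.comp, hb]
    rw [Finset.sum_range_succ', harmonic]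
    push_cast
    simp
  set D : ℝ → ℝ := fun t => cf a (fun n => Real.log n) t - cf b (fun n => n) t with hD
  have hDlim : Tendsto D atTop (𝓝 (C - Real.eulerMascheroniConstant)) := by
    refine (hla.sub hlb).congr fun t => ?_
    simp only [hD]; ring
  have hamono : Monotone (cf a (fun n => Real.log n)) := by
    intro s t hst
    rw [hcfa]
    refine Finset.sum_le_sum_of_subset_of_nonneg ?_ (fun n _ _ => ha0 n)
    apply Finset.range_mono
    gcongr
  have hbmono : Monotone (cf b (fun n => n)) := by
    intro s t hst
    rw [hcfb, hcfb]
    refine Finset.sum_le_sum_of_subset_of_nonneg ?_ (fun n _ _ => hb0 n)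
    apply Finset.range_mono
    gcongr
  have hapos : ∀ t, 0 ≤ cf a (fun n => Real.log n) t := fun t => by
    rw [hcfa]; exact Finset.sum_nonneg fun n _ => ha0 n
  have hbpos : ∀ t, 0 ≤ cf b (fun n => n) t := fun t => by
    rw [hcfb]; exact Finset.sum_nonneg fun n _ => hb0 n
  obtain ⟨B, hB⟩ : ∃ B, ∀ t, |D t| ≤ B := by
    have := (hDlim.abs.eventually (eventually_le_nhds (lt_add_one _)))
    obtain ⟨T, hT⟩ := eventually_atTop.1 this
    refine ⟨max (|C - Real.eulerMascheroniConstant| + 1)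
      (cf a (fun n => Real.log n) T + cf b (fun n => n) T), fun t => ?_⟩
    rcases le_total T t with h | h
    · exact (hT t h).trans (le_max_left _ _)
    · refine le_trans ?_ (le_max_right _ _)
      have h1 := hamono h
      have h2 := hbmono h
      have h3 := hapos t
      have h4 := hbpos t
      simp only [hD]
      rw [abs_le]
      constructor <;> linarith
  have h := abel_limit D (hma.sub hmb) B _ hB hDlim
  refine h.congr' ?_
  filter_upwards [self_mem_nhdsWithin] with δ hδ
  have hδ0 : 0 < δ := hδ
  have hsb : Summable fun n : ℕ => |b n| * Real.exp (-(δ * n)) := by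
    refine Summable.of_nonneg_of_le (fun n => by positivity) (fun n => ?_)
      (summable_geometric_of_lt_one (Real.exp_pos (-δ)).le (by simpa using hδ0))
    rw [← Real.exp_nat_mul, abs_of_nonneg (hb0 n), show (n : ℝ) * -δ = -(δ * n) by ring]
    have : b n ≤ 1 := by
      simp only [hb]
      rcases Nat.eq_zero_or_pos n with rfl | hn
      · simp
      · rw [div_le_one (by positivity)]; exact_mod_cast hn
    calc _ ≤ 1 * Real.exp (-(δ * n)) := by gcongr
      _ = _ := one_mul _
  have hsa := summable_vM δ hδ0
  have e1 := laplace a (fun n => Real.log n) (fun n => Real.log_natCast_nonneg n) δ hδ0 hsa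
  have e2 := laplace b (fun n => n) (fun n => Nat.cast_nonneg n) δ hδ0 hsb
  have p1 : 0 < ∑' n : ℕ, a n * Real.exp (-(δ * Real.log n)) := by
    refine Summable.tsum_pos ?_ (fun n => mul_nonneg (ha0 n) (Real.exp_pos _).le) 2 ?_
    · refine hsa.congr fun n => ?_
      rw [abs_of_nonneg]; exact ha0 n
    · have h3 : 0 < a 2 := by
        simp only [ha]
        rw [vonMangoldt_apply_prime Nat.prime_two]
        have : 0 < Real.log (2 : ℕ) := Real.log_pos (by norm_num)
        positivity
      exact mul_pos h3 (Real.exp_pos _)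
  have p2 : 0 < ∑' n : ℕ, b n * Real.exp (-(δ * n)) := by
    refine Summable.tsum_pos ?_ (fun n => mul_nonneg (hb0 n) (Real.exp_pos _).le) 1 ?_
    · refine hsb.congr fun n => ?_
      rw [abs_of_nonneg (hb0 n)]
    · have h3 : 0 < b 1 := by simp [hb]
      exact mul_pos h3 (Real.exp_pos _)
  have i1 : Integrable (fun t => δ * Real.exp (-(δ * t)) * cf a (fun n => Real.log n) t)
      (volume.restrict (Set.Ioi (0 : ℝ))) := Integrable.of_integral_ne_zero (by rw [e1]; exact p1.ne')
  have i2 : Integrable (fun t => δ * Real.exp (-(δ * t)) * cf b (fun n => n) t)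
      (volume.restrict (Set.Ioi (0 : ℝ))) := Integrable.of_integral_ne_zero (by rw [e2]; exact p2.ne')
  rw [← e1, ← e2, ← integral_sub i1 i2]
  refine integral_congr_ae (Eventually.of_forall fun t => ?_)
  simp only [hD]
  ring

end MinOrd

namespace MinOrd
open ArithmeticFunction Topology

lemma term_rpow (δ : ℝ) (n : ℕ) (w : ℝ) :
    w / (n * Real.log n) * Real.exp (-(δ * Real.log n)) = w / ((n : ℝ) ^ (1 + δ) * Real.log n) := by
  rcases Nat.eq_zero_or_pos n with rfl | hn
  · simp
  have hn0 : (0 : ℝ) < n := by exact_mod_cast hn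
  rw [Real.rpow_add hn0, Real.rpow_one, Real.rpow_def_of_pos hn0 δ, Real.exp_neg, mul_comm δ]
  have := Real.exp_pos (Real.log n * δ)
  field_simp

lemma zeta_side : Tendsto (fun δ : ℝ => Real.log (riemannZeta ((1 + δ : ℝ) : ℂ)).re + Real.log δ)
    (𝓝[>] 0) (𝓝 0) := by
  have h1 : Tendsto (fun δ : ℝ => ((1 + δ : ℝ) : ℂ)) (𝓝[>] 0) (𝓝[≠] 1) := by
    rw [tendsto_nhdsWithin_iff]
    constructor
    · have : Continuous fun δ : ℝ => ((1 + δ : ℝ) : ℂ) := by fun_prop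
      have h := (this.tendsto 0).mono_left (nhdsWithin_le_nhds (s := Set.Ioi (0 : ℝ)))
      simpa using h
    · filter_upwards [self_mem_nhdsWithin] with δ hδ
      have hδ0 : 0 < δ := hδ
      simp only [Set.mem_compl_iff, Set.mem_singleton_iff]
      rw [← Complex.ofReal_one, Complex.ofReal_inj]
      linarith
  have h2 := (Complex.continuous_re.tendsto _).comp (riemannZeta_residue_one.comp h1)
  rw [Complex.one_re] at h2
  have h3 : Tendsto (fun δ : ℝ => δ * (riemannZeta ((1 + δ : ℝ) : ℂ)).re) (𝓝[>] 0) (𝓝 1) := by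
    refine h2.congr fun δ => ?_
    simp only [Function.comp]
    rw [show (((1 + δ : ℝ) : ℂ) - 1) = (δ : ℂ) by push_cast; ring, Complex.re_ofReal_mul]
  have h4 := (Real.continuousAt_log (by norm_num : (1 : ℝ) ≠ 0)).tendsto.comp h3
  rw [Real.log_one] at h4
  refine h4.congr' ?_
  filter_upwards [self_mem_nhdsWithin, h3.eventually (lt_mem_nhds (by norm_num : (0 : ℝ) < 1))] with δ hδ hp
  have hδ0 : 0 < δ := hδ
  simp only [Function.comp]
  rw [Real.log_mul hδ0.ne' (pos_of_mul_pos_right hp hδ0.le).ne', add_comm]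

lemma exp_side : Tendsto (fun δ : ℝ => ∑' n : ℕ, 1 / (n : ℝ) * Real.exp (-(δ * n)) + Real.log δ)
    (𝓝[>] 0) (𝓝 0) := by
  have h1 : Tendsto (fun δ : ℝ => δ⁻¹ * (1 - Real.exp (-δ))) (𝓝[>] 0) (𝓝 1) := by
    have : HasDerivAt (fun δ : ℝ => 1 - Real.exp (-δ)) 1 0 := by
      have := ((Real.hasDerivAt_exp (-0)).comp (0 : ℝ) (hasDerivAt_neg 0)).const_sub 1
      simpa using this
    have h := (hasDerivAt_iff_tendsto_slope_zero.1 this).mono_left (nhdsWithin_mono (s := Set.Ioi (0 : ℝ)) _ (by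
      intro x hx; simpa using (ne_of_gt hx)))
    simpa using h
  have h4 := (Real.continuousAt_log (by norm_num : (1 : ℝ) ≠ 0)).tendsto.comp h1
  rw [Real.log_one] at h4
  have h5 := h4.neg
  rw [neg_zero] at h5
  refine h5.congr' ?_
  filter_upwards [self_mem_nhdsWithin] with δ hδ
  have hδ0 : 0 < δ := hδ
  have he : Real.exp (-δ) < 1 := by simpa using hδ0
  have hs := Real.hasSum_pow_div_log_of_abs_lt_one (x := Real.exp (-δ)) (by
    rw [abs_of_pos (Real.exp_pos _)]; exact he)
  have hs2 : HasSum (fun n : ℕ => 1 / (n : ℝ) * Real.exp (-(δ * n))) (-Real.log (1 - Real.exp (-δ))) := by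
    rw [← hasSum_nat_add_iff' 1]
    simp only [Finset.range_one, Finset.sum_singleton, Nat.cast_zero, div_zero, zero_mul, sub_zero]
    have hfe : (fun n : ℕ => 1 / ((n + 1 : ℕ) : ℝ) * Real.exp (-(δ * ((n + 1 : ℕ) : ℝ)))) =
        fun n : ℕ => Real.exp (-δ) ^ (n + 1) / ((n : ℝ) + 1) := by
      funext n
      rw [← Real.exp_nat_mul]
      push_cast
      rw [show -(δ * ((n : ℝ) + 1)) = ((n : ℝ) + 1) * -δ by ring]
      ring
    rw [hfe]
    exact hs
  rw [hs2.tsum_eq]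
  simp only [Function.comp]
  rw [Real.log_mul (by positivity) (by linarith), Real.log_inv]
  ring

lemma const_one (C : ℝ)
    (hC : Tendsto (fun N : ℕ => ∑ n ∈ Finset.range N, Λ n / (n * Real.log n) - Real.log (Real.log N))
      atTop (𝓝 C)) : C = Real.eulerMascheroniConstant := by
  have h1 := one_constant C hC
  have h2 := zeta_side.sub exp_side
  have h3 := tendsto_nhds_unique h1 (h2.congr' (by
    filter_upwards [self_mem_nhdsWithin] with δ hδ
    have hδ0 : 0 < δ := hδ
    rw [log_riemannZeta_eq (by linarith)]
    simp_rw [term_rpow]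
    ring))
  linarith

lemma chiOne_eq (n : ℕ) : chiOne (n : ZMod 4) = ((X4 n : ℝ) : ℂ) := by
  simp [chiOne, X4_apply, MulChar.ringHomComp_apply]

lemma chiOne_ne : chiOne ≠ 1 := by
  intro h
  have h1 := chiOne_eq 3
  rw [h, X4_apply, show ZMod.χ₄ ((3 : ℕ) : ZMod 4) = -1 by decide,
    MulChar.one_apply (by decide)] at h1
  norm_num at h1

lemma const_chi (C : ℝ)
    (hC : Tendsto (fun N => ∑ n ∈ Finset.range N, X4 n * Λ n / (n * Real.log n)) atTop (𝓝 C)) :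
    ((Real.exp C : ℝ) : ℂ) = DirichletCharacter.LFunction chiOne 1 := by
  have h1 := chi_constant C hC
  have h2 : Tendsto (fun δ : ℝ => Complex.exp ((∑' n : ℕ, X4 n * Λ n / (n * Real.log n) * Real.exp (-(δ * Real.log n)) : ℝ) : ℂ))
      (𝓝[>] 0) (𝓝 (Complex.exp (C : ℂ))) :=
    ((Complex.continuous_exp.comp Complex.continuous_ofReal).tendsto C).comp h1
  rw [Complex.ofReal_exp]
  refine tendsto_nhds_unique h2 ?_
  have hc : Continuous fun δ : ℝ => DirichletCharacter.LFunction chiOne ((1 + δ : ℝ) : ℂ) :=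
    (DirichletCharacter.differentiable_LFunction chiOne_ne).continuous.comp (by fun_prop)
  have h3 := (hc.tendsto 0).mono_left (nhdsWithin_le_nhds (s := Set.Ioi (0 : ℝ)))
  rw [add_zero, Complex.ofReal_one] at h3
  refine h3.congr' ?_
  filter_upwards [self_mem_nhdsWithin] with δ hδ
  have hδ0 : 0 < δ := hδ
  have hre : 1 < ((1 + δ : ℝ) : ℂ).re := by rw [Complex.ofReal_re]; linarith
  rw [DirichletCharacter.LFunction_eq_LSeries _ hre, ← DirichletCharacter.LSeries_eq_exp_LSeries _ hre,
    LSeries, Complex.ofReal_tsum]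
  congr 1
  refine tsum_congr fun n => ?_
  rw [LSeries.term_def, term_rpow, chiOne_eq]
  split_ifs with hn
  · simp [hn]
  · push_cast
    rw [Complex.ofReal_cpow (Nat.cast_nonneg n)]
    push_cast
    rw [div_div, mul_comm (Complex.log _)]

end MinOrd

namespace MinOrd
open ArithmeticFunction Topology

/-- local density -/
noncomputable def gd (m p : ℕ) : ℝ := (1 - 1 / (p : ℝ)) * (1 - X4 p / (p : ℝ) ^ m)

lemma prod_exp (X : ℕ →* ℝ) (hX : ∀ n, |X n| ≤ 1) (N : ℕ) :
    ∏ p ∈ (Finset.range N).filter Nat.Prime, (1 - X p / (p : ℝ)) =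
      Real.exp (-∑ p ∈ (Finset.range N).filter Nat.Prime, -Real.log (1 - X p / (p : ℝ))) := by
  rw [Finset.sum_neg_distrib, neg_neg, Real.exp_sum]
  refine Finset.prod_congr rfl fun p hp => ?_
  have hp2 : (2 : ℝ) ≤ p := by exact_mod_cast (Finset.mem_filter.1 hp).2.two_le
  have h1 := (abs_le.1 (hX p)).2
  rw [Real.exp_log]
  have : X p / (p : ℝ) < 1 := by
    rw [div_lt_one (by linarith)]; linarith
  linarith

lemma mertens_prod : Tendsto (fun N : ℕ => (∏ p ∈ (Finset.range N).filter Nat.Prime, (1 - 1 / (p : ℝ))) * Real.log N)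
    atTop (𝓝 (Real.exp (-Real.eulerMascheroniConstant))) := by
  obtain ⟨C, hC⟩ := conv_one
  have hC' := const_one C hC
  have h1 := primes_vs_vonMangoldt 1 (by simp)
  simp only [MonoidHom.one_apply, one_mul] at h1
  have h2 := (h1.add hC).neg
  rw [zero_add, hC'] at h2
  refine ((Real.continuous_exp.tendsto _).comp h2).congr' ?_
  filter_upwards [eventually_ge_atTop 2] with N hN
  have hl : 0 < Real.log N := Real.log_pos (by exact_mod_cast hN)
  have h3 := prod_exp 1 (by simp) N
  simp only [MonoidHom.one_apply] at h3
  rw [h3]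
  nth_rw 1 [← Real.exp_log hl]
  rw [← Real.exp_add]
  simp only [Function.comp]
  congr 1
  ring

lemma chi_prod_one : ∃ c : ℝ, Tendsto (fun N : ℕ => (∏ p ∈ (Finset.range N).filter Nat.Prime, (1 - X4 p / (p : ℝ))))
    atTop (𝓝 c) ∧ (c : ℂ) = (DirichletCharacter.LFunction chiOne 1)⁻¹ := by
  obtain ⟨C, hC⟩ := conv_chi
  refine ⟨Real.exp (-C), ?_, ?_⟩
  · have h1 := primes_vs_vonMangoldt X4 X4_abs
    have h2 := (h1.add hC).neg
    rw [zero_add] at h2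
    refine ((Real.continuous_exp.tendsto _).comp h2).congr fun N => ?_
    rw [prod_exp X4 X4_abs N]
    simp only [Function.comp]
    congr 1
    ring
  · rw [← const_chi C hC, Real.exp_neg]
    push_cast
    rfl

lemma chi_prod_big (m : ℕ) (hm : 2 ≤ m) : ∃ c : ℝ, Tendsto (fun N : ℕ => (∏ p ∈ (Finset.range N).filter Nat.Prime, (1 - X4 p / (p : ℝ) ^ m)))
    atTop (𝓝 c) ∧ (c : ℂ) = (DirichletCharacter.LFunction chiOne m)⁻¹ := by
  have hre : 1 < (m : ℂ).re := by rw [Complex.natCast_re]; exact_mod_cast hm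
  have h := (DirichletCharacter.LSeries_eulerProduct chiOne hre).inv₀
    (DirichletCharacter.LSeries_ne_zero_of_one_lt_re chiOne hre)
  rw [← DirichletCharacter.LFunction_eq_LSeries _ hre] at h
  have h2 : Tendsto (fun N : ℕ => ((∏ p ∈ (Finset.range N).filter Nat.Prime, (1 - X4 p / (p : ℝ) ^ m) : ℝ) : ℂ)) atTop
      (𝓝 (DirichletCharacter.LFunction chiOne m)⁻¹) := by
    refine h.congr fun N => ?_
    rw [← Finset.prod_inv_distrib, Complex.ofReal_prod]
    refine Finset.prod_congr rfl fun p hp => ?_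
    rw [inv_inv, chiOne_eq, Complex.cpow_neg, Complex.cpow_natCast]
    push_cast
    rw [div_eq_mul_inv]
  have h3 := (Complex.continuous_re.tendsto _).comp h2
  refine ⟨_, h3, ?_⟩
  exact tendsto_nhds_unique ((Complex.continuous_ofReal.tendsto _).comp h3) h2

lemma main_prod (m : ℕ) (hm : 1 ≤ m) : ∃ c : ℝ, Tendsto (fun N : ℕ => (∏ p ∈ (Finset.range N).filter Nat.Prime, gd m p) * Real.log N)
    atTop (𝓝 c) ∧ (c : ℂ) = (DirichletCharacter.LFunction chiOne m)⁻¹ * (Real.exp (-Real.eulerMascheroniConstant) : ℝ) := by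
  obtain ⟨c, h1, h2⟩ : ∃ c : ℝ, Tendsto (fun N : ℕ => (∏ p ∈ (Finset.range N).filter Nat.Prime, (1 - X4 p / (p : ℝ) ^ m)))
    atTop (𝓝 c) ∧ (c : ℂ) = (DirichletCharacter.LFunction chiOne m)⁻¹ := by
    rcases hm.eq_or_lt with rfl | hm
    · simpa using chi_prod_one
    · exact chi_prod_big m hm
  refine ⟨c * Real.exp (-Real.eulerMascheroniConstant), ?_, ?_⟩
  · refine (h1.mul mertens_prod).congr fun N => ?_
    simp only [gd]
    rw [Finset.prod_mul_distrib]
    ring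
  · rw [← h2]; push_cast; rfl

lemma gd_bounds (m p : ℕ) (hm : 1 ≤ m) (hp : p.Prime) :
    0 < gd m p ∧ gd m p ≤ 1 ∧ (1 - 1 / (p : ℝ)) ^ 2 ≤ gd m p := by
  have hp2 : (2 : ℝ) ≤ p := by exact_mod_cast hp.two_le
  have hX := abs_le.1 (X4_abs p)
  have hpm : (p : ℝ) ≤ (p : ℝ) ^ m := le_self_pow₀ (by linarith) (by omega)
  have hpm0 : (0 : ℝ) < (p : ℝ) ^ m := by positivity
  have h1 : X4 p / (p : ℝ) ^ m ≤ 1 / p := by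
    calc _ ≤ 1 / (p : ℝ) ^ m := by gcongr; exact hX.2
      _ ≤ _ := by gcongr
  have h1' : -(1 / (p : ℝ)) ≤ X4 p / (p : ℝ) ^ m := by
    calc _ ≤ -(1 / (p : ℝ) ^ m) := by gcongr
      _ = (-1) / (p : ℝ) ^ m := by ring
      _ ≤ _ := by gcongr; exact hX.1
  have h2 : 1 / (p : ℝ) ≤ 1 / 2 := by gcongr
  have h3 : 0 < 1 / (p : ℝ) := by positivity
  unfold gd
  refine ⟨mul_pos (by linarith) (by linarith), ?_, ?_⟩
  · nlinarith
  · rw [sq]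
    gcongr
    linarith

end MinOrd

namespace MinOrd
open ArithmeticFunction Topology

lemma lower (m n N : ℕ) (hm : 1 ≤ m) (hn : n ≠ 0) (hN : 2 ≤ N) (hlog : Real.log n ≤ N + 1) :
    (∏ p ∈ (Finset.range N).filter Nat.Prime, gd m p) *
      (1 - 2 * (N + 1) / (N * Real.log N)) ≤ ∏ p ∈ n.primeFactors, gd m p := by
  have hN2 : (2 : ℝ) ≤ N := by exact_mod_cast hN
  have hlN : 0 < Real.log N := Real.log_pos (by linarith)
  set S := n.primeFactors.filter (fun p => N ≤ p) with hS
  have hprime : ∀ p ∈ n.primeFactors, p.Prime := fun p hp => Nat.prime_of_mem_primeFactors hp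
  have hK : (S.card : ℝ) * Real.log N ≤ N + 1 := by
    refine le_trans ?_ hlog
    rw [← Real.log_pow]
    apply Real.log_le_log (by positivity)
    have h1 : N ^ S.card ≤ ∏ p ∈ S, p := Finset.pow_card_le_prod _ _ _ fun p hp => (Finset.mem_filter.1 hp).2
    have h2 : ∏ p ∈ S, p ≤ n := by
      apply Nat.le_of_dvd (Nat.pos_of_ne_zero hn)
      exact (Finset.prod_dvd_prod_of_subset _ _ _ (Finset.filter_subset _ _)).trans (Nat.prod_primeFactors_dvd n)
    exact_mod_cast h1.trans h2
  have hbig : 1 - 2 * (N + 1) / (N * Real.log N) ≤ ∏ p ∈ S, gd m p := by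
    calc (1 : ℝ) - 2 * (N + 1) / (N * Real.log N) ≤ 1 + ((2 * S.card : ℕ) : ℝ) * (-(1 / (N : ℝ))) := by
          have : (S.card : ℝ) ≤ (N + 1) / Real.log N := by rwa [le_div_iff₀ hlN]
          have h3 : (2 * (S.card : ℝ)) * (1 / N) ≤ 2 * ((N + 1) / Real.log N) * (1 / N) := by gcongr
          have h4 : 2 * ((N + 1) / Real.log N) * (1 / N) = 2 * ((N : ℝ) + 1) / (N * Real.log N) := by
            field_simp
          push_cast
          linarith
      _ ≤ (1 + -(1 / (N : ℝ))) ^ (2 * S.card) := by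
          apply one_add_mul_le_pow
          have : 1 / (N : ℝ) ≤ 1 := by rw [div_le_one (by linarith)]; linarith
          linarith
      _ = ∏ p ∈ S, (1 - 1 / (N : ℝ)) ^ 2 := by
          rw [Finset.prod_const, ← pow_mul, ← sub_eq_add_neg]
      _ ≤ ∏ p ∈ S, gd m p := by
          refine Finset.prod_le_prod (fun p _ => sq_nonneg _) fun p hp => ?_
          obtain ⟨hp1, hp2⟩ := Finset.mem_filter.1 hp
          refine le_trans ?_ (gd_bounds m p hm (hprime p hp1)).2.2
          have h5 : 1 / (N : ℝ) ≤ 1 := by rw [div_le_one (by linarith)]; linarith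
          have h6 : 1 / (p : ℝ) ≤ 1 / N := by gcongr
          apply pow_le_pow_left₀ (by linarith)
          linarith
  have hsmall : ∏ p ∈ (Finset.range N).filter Nat.Prime, gd m p ≤
      ∏ p ∈ n.primeFactors.filter (fun p => ¬ N ≤ p), gd m p := by
    have hsub : n.primeFactors.filter (fun p => ¬ N ≤ p) ⊆ (Finset.range N).filter Nat.Prime := by
      intro p hp
      obtain ⟨hp1, hp2⟩ := Finset.mem_filter.1 hp
      rw [Finset.mem_filter, Finset.mem_range]
      exact ⟨by omega, hprime p hp1⟩
    rw [← Finset.prod_sdiff hsub]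
    refine mul_le_of_le_one_left ?_ ?_
    · exact Finset.prod_nonneg fun p hp => (gd_bounds m p hm (hprime p (Finset.mem_filter.1 hp).1)).1.le
    · refine Finset.prod_le_one (fun p hp => ?_) (fun p hp => ?_)
      · exact (gd_bounds m p hm (Finset.mem_filter.1 (Finset.mem_sdiff.1 hp).1).2).1.le
      · exact (gd_bounds m p hm (Finset.mem_filter.1 (Finset.mem_sdiff.1 hp).1).2).2.1
  rw [← Finset.prod_filter_mul_prod_filter_not n.primeFactors (fun p => N ≤ p), mul_comm]
  have hP : 0 ≤ ∏ p ∈ (Finset.range N).filter Nat.Prime, gd m p :=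
    Finset.prod_nonneg fun p hp => (gd_bounds m p hm (Finset.mem_filter.1 hp).2).1.le
  have hQ : 0 ≤ ∏ p ∈ S, gd m p :=
    Finset.prod_nonneg fun p hp => (gd_bounds m p hm (hprime p (Finset.mem_filter.1 hp).1)).1.le
  exact mul_le_mul hbig hsmall hP hQ

lemma primeFactors_primorial (N : ℕ) :
    (primorial N).primeFactors = (Finset.range (N + 1)).filter Nat.Prime := by
  unfold primorial
  exact Nat.primeFactors_prod fun p hp => (Finset.mem_filter.1 hp).2

lemma primorial_tendsto : Tendsto primorial atTop atTop := by
  rw [tendsto_atTop]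
  intro A
  obtain ⟨p, hpA, hp⟩ := Nat.exists_infinite_primes A
  filter_upwards [eventually_ge_atTop p] with N hN
  refine hpA.trans (Nat.le_of_dvd (primorial_pos N) ?_)
  exact Finset.dvd_prod_of_mem (fun p => p) (by simp [hp]; omega)

lemma liminf_main (m : ℕ) (hm : 1 ≤ m) (c : ℝ)
    (hc : Tendsto (fun N : ℕ => (∏ p ∈ (Finset.range N).filter Nat.Prime, gd m p) * Real.log N)
      atTop (𝓝 c)) (f : ℕ → ℝ)
    (hf : ∀ n, n ≠ 0 → f n = (∏ p ∈ n.primeFactors, gd m p) * Real.log (Real.log n)) :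
    Filter.liminf f atTop = c := by
  have hPpos : ∀ N : ℕ, 0 ≤ ∏ p ∈ (Finset.range N).filter Nat.Prime, gd m p := fun N =>
    Finset.prod_nonneg fun p hp => (gd_bounds m p hm (Finset.mem_filter.1 hp).2).1.le
  have hlogN : Tendsto (fun N : ℕ => Real.log (N : ℝ)) atTop atTop :=
    Real.tendsto_log_atTop.comp tendsto_natCast_atTop_atTop
  have hE : Tendsto (fun N : ℕ => (1 - 2 * ((N : ℝ) + 1) / (N * Real.log N))) atTop (𝓝 1) := by
    have h1 : Tendsto (fun N : ℕ => 1 - 2 * ((1 + 1 / (N : ℝ)) / Real.log N)) atTop (𝓝 (1 - 2 * 0)) := by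
      refine Tendsto.const_sub _ (Tendsto.const_mul _ ?_)
      refine Tendsto.div_atTop (a := 1 + 0) ?_ hlogN
      exact tendsto_one_div_atTop_nhds_zero_nat.const_add 1
    rw [mul_zero, sub_zero] at h1
    refine h1.congr' ?_
    filter_upwards [eventually_ge_atTop 2] with N hN
    have hN2 : (2 : ℝ) ≤ N := by exact_mod_cast hN
    have hlN : 0 < Real.log N := Real.log_pos (by linarith)
    field_simp
  have hF := hc.mul hE
  rw [mul_one] at hF
  have hfl : Tendsto (fun n : ℕ => ⌊Real.log (n : ℝ)⌋₊) atTop atTop := tendsto_nat_floor_atTop.comp hlogN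
  have hlow : ∀ a < c, ∀ᶠ n in atTop, a ≤ f n := by
    intro a ha
    filter_upwards [hfl.eventually (hF.eventually (le_mem_nhds ha)),
      hfl.eventually (hE.eventually (le_mem_nhds (by norm_num : (0 : ℝ) < 1))),
      hfl.eventually (eventually_ge_atTop 2), eventually_ge_atTop 1] with n h1 h2 h3 h4
    refine h1.trans ?_
    have hn : n ≠ 0 := by omega
    rw [hf n hn]
    set N := ⌊Real.log (n : ℝ)⌋₊ with hN
    have hN2 : (2 : ℝ) ≤ N := by exact_mod_cast h3
    have hlN : 0 < Real.log N := Real.log_pos (by linarith)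
    have h5 := lower m n N hm hn h3 (Nat.lt_floor_add_one _).le
    have h6 : (N : ℝ) ≤ Real.log n := Nat.floor_le (Real.log_natCast_nonneg n)
    have h7 : Real.log N ≤ Real.log (Real.log n) := Real.log_le_log (by linarith) h6
    calc _ = ((∏ p ∈ (Finset.range N).filter Nat.Prime, gd m p) *
      (1 - 2 * (N + 1) / (N * Real.log N))) * Real.log N := by ring
      _ ≤ _ := mul_le_mul h5 h7 hlN.le ((mul_nonneg (hPpos N) h2).trans h5)
  have hup0 : Tendsto (fun N : ℕ => (∏ p ∈ (Finset.range (N + 1)).filter Nat.Prime, gd m p) *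
      (Real.log ((N + 1 : ℕ) : ℝ) + Real.log (Real.log 4))) atTop (𝓝 c) := by
    have h1 : Tendsto (fun N : ℕ => (∏ p ∈ (Finset.range N).filter Nat.Prime, gd m p) *
      (Real.log N + Real.log (Real.log 4))) atTop (𝓝 c) := by
      have h2 : Tendsto (fun N : ℕ => 1 + Real.log (Real.log 4) / Real.log N) atTop (𝓝 (1 + 0)) :=
        (tendsto_const_nhds.div_atTop hlogN).const_add 1
      have h3 := hc.mul h2
      rw [add_zero, mul_one] at h3
      refine h3.congr' ?_
      filter_upwards [eventually_ge_atTop 2] with N hN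
      have hN2 : (2 : ℝ) ≤ N := by exact_mod_cast hN
      have hlN : 0 < Real.log N := Real.log_pos (by linarith)
      field_simp
    exact (tendsto_add_atTop_iff_nat 1).2 h1
  have hup : ∀ b > c, ∃ᶠ n in atTop, f n ≤ b := by
    intro b hb
    refine primorial_tendsto.frequently (Eventually.frequently ?_)
    filter_upwards [hup0.eventually (ge_mem_nhds hb), eventually_ge_atTop 2] with N h1 h2
    refine le_trans ?_ h1
    rw [hf _ (primorial_pos N).ne', primeFactors_primorial]
    refine mul_le_mul_of_nonneg_left ?_ (hPpos _)
    have hl4 : 0 < Real.log 4 := Real.log_pos (by norm_num)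
    rw [← Real.log_mul (by positivity) hl4.ne']
    have hpr : 2 ≤ primorial N := by
      refine Nat.le_of_dvd (primorial_pos N) ?_
      exact Finset.dvd_prod_of_mem (fun p => p) (by simp [Nat.prime_two]; omega)
    have hprr : (1 : ℝ) < primorial N := by exact_mod_cast hpr
    apply Real.log_le_log (Real.log_pos hprr)
    have h3 : (primorial N : ℝ) ≤ 4 ^ N := by exact_mod_cast primorial_le_four_pow N
    calc Real.log (primorial N) ≤ Real.log (4 ^ N) := Real.log_le_log (by linarith) h3
      _ = N * Real.log 4 := Real.log_pow _ _
      _ ≤ _ := by gcongr; omega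
  have hbdd : IsBoundedUnder (· ≥ ·) atTop f := ⟨c - 1, by
    rw [eventually_map]; exact hlow _ (by linarith)⟩
  have hcobdd : IsCoboundedUnder (· ≥ ·) atTop f :=
    IsCoboundedUnder.of_frequently_le (hup (c + 1) (by linarith))
  apply le_antisymm
  · exact le_of_forall_gt_imp_ge_of_dense fun b hb => liminf_le_of_frequently_le (hup b hb) hbdd
  · exact le_of_forall_lt_imp_le_of_dense fun a ha => le_liminf_of_le hcobdd (hlow a ha)

end MinOrd

/-- Theorem 7 (keven, case `k ≡ 2 mod 4`): the minimal order of `Φ_k(n)` is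
`L(k/2, χ₁)^{-1} e^{-γ} n^k / log log n`. -/
theorem minimal_order_two_mod_four (k : ℕ) (hk : 2 ≤ k) (hmod : k % 4 = 2) :
    (↑(Filter.liminf
        (fun n : ℕ => (genTotient k n : ℝ) * Real.log (Real.log n) / (n : ℝ) ^ k)
        Filter.atTop : ℝ) : ℂ) =
      (DirichletCharacter.LFunction chiOne (k / 2))⁻¹ *
        (Real.exp (-Real.eulerMascheroniConstant) : ℝ) := by
  obtain ⟨c, hc, hc2⟩ := MinOrd.main_prod (k / 2) (by omega)
  have hk2 : ((k / 2 : ℕ) : ℂ) = (k : ℂ) / 2 := by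
    rw [Nat.cast_div (by omega) (by norm_num)]; norm_num
  rw [← hk2, ← hc2]
  congr 1
  refine MinOrd.liminf_main (k / 2) (by omega) c hc _ fun n hn => ?_
  rw [mul_div_right_comm, genTotient_div k n hn]
  congr 1
  refine Finset.prod_congr rfl fun p hp => ?_
  rw [genTotient_prime k p hmod (Nat.prime_of_mem_primeFactors hp)]
  rfl
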